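/- arXiv:1903.06114 — 2 statements merged into one kernel-verified Lean document; each statement's English description precedes it below -/
import Mathlib

section
/- Let p ≥ 1 and m = k·2^z with k odd and z ≥ 1. Let β ∈ [0, ⌈z/p⌉ − 2] and c ∈ [1, p−1]. Then for all n ∈ ℕ and all e < 2^{pn}: [m divides 2^{pn}·k·2^{z−βp−1} + e and s((2^{pn}·k·2^{z−βp−1} + e)/m) = 1] if and only if [m divides 2^{pn}·k·2^{z−(βp+c)−1} + e and s((2^{pn}·k·2^{z−(βp+c)−1} + e)/m) = 1]. [This shows that the states (k·2^{z−βp−1}, B) and (k·2^{z−(βp+c)−1}, B) of the projected automaton accept the same language, so all states of the class Γ_β are indistinguishable.] -/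
/-- The parity (in `ZMod 2`) of the number of 1s in the binary expansion of `n`. -/
def sTM (n : ℕ) : ZMod 2 := ((Nat.digits 2 n).count 1 : ZMod 2)

/-!
Write `m = a * 2 ^ l` with `a > 0`. Reading `N` bits from the state `a` yields `2 ^ N * a + e` with
`e < 2 ^ N`. If `N < l`, this lies strictly between `0` and `m`, so nothing is accepted. If `l ≤ N`,
it equals `m * 2 ^ (N - l) + e`; divisibility by `m` is then a condition on `e` alone, and the
quotient is `e / m` with one extra leading `1` in binary. So, for fixed `m`, the language of `a`
depends on `l` only through the condition `l ≤ N`. The states of `Γ_β` have `l = β * p + c + 1` with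
`c < p`, and for `N = p * n` this condition reads `β < n`.
-/

/-- The acceptance condition of the projected product automaton modulo `m`, started in the state
`(i, x)`, for a word of value `e`. The word enters only through `e` and its length `N` in bits: a
word of length `n` over `{0, …, 2 ^ p - 1}` has `N = p * n`. -/
def IsAcceptedFrom (m i : ℕ) (x : ZMod 2) (N e : ℕ) : Prop :=
  m ∣ 2 ^ N * i + e ∧ sTM ((2 ^ N * i + e) / m) = x

theorem sTM_two_pow_mul_add (a : ℕ) {t q : ℕ} (hq : q < 2 ^ t) :
    sTM (2 ^ t * a + q) = sTM a + sTM q := by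
  rcases Nat.eq_zero_or_pos a with rfl | ha
  · simp [sTM]
  · obtain ⟨padding, rfl⟩ := Nat.exists_eq_add_of_le ((Nat.digits_length_le_iff one_lt_two q).2 hq)
    rw [add_comm (_ * a), sTM, ← Nat.digits_append_zeroes_append_digits one_lt_two ha]
    simp [sTM, List.count_replicate, add_comm]

theorem not_isAcceptedFrom_of_lt {a l N e : ℕ} (ha : 0 < a) (hN : N < l) (he : e < 2 ^ N)
    (x : ZMod 2) : ¬ IsAcceptedFrom (a * 2 ^ l) a x N e := by
  have hlt : 2 ^ N * a + e < a * 2 ^ l :=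
    calc 2 ^ N * a + e < 2 ^ N * a + 2 ^ N * a := by
          gcongr
          exact he.trans_le (Nat.le_mul_of_pos_right _ ha)
      _ = a * 2 ^ (N + 1) := by ring
      _ ≤ a * 2 ^ l := by gcongr <;> omega
  exact fun h ↦ Nat.not_dvd_of_pos_of_lt (by positivity) hlt h.1

theorem isAcceptedFrom_iff_of_le {a l N e : ℕ} (ha : 0 < a) (hN : l ≤ N) (he : e < 2 ^ N)
    (x : ZMod 2) :
    IsAcceptedFrom (a * 2 ^ l) a x N e ↔
      a * 2 ^ l ∣ e ∧ 1 + sTM (e / (a * 2 ^ l)) = x := by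
  obtain ⟨t, rfl⟩ := Nat.exists_eq_add_of_le hN
  have hm : 0 < a * 2 ^ l := by positivity
  have hsplit : 2 ^ (l + t) * a = a * 2 ^ l * 2 ^ t := by ring
  have hquot : e / (a * 2 ^ l) < 2 ^ t := by
    rw [Nat.div_lt_iff_lt_mul hm]
    calc e < 2 ^ (l + t) := he
      _ ≤ 2 ^ (l + t) * a := Nat.le_mul_of_pos_right _ ha
      _ = 2 ^ t * (a * 2 ^ l) := by ring
  have hparity : sTM (2 ^ t + e / (a * 2 ^ l)) = 1 + sTM (e / (a * 2 ^ l)) := by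
    simpa [sTM] using sTM_two_pow_mul_add 1 hquot
  rw [IsAcceptedFrom, hsplit, Nat.mul_add_div hm, hparity, Nat.dvd_add_right (dvd_mul_right _ _)]

theorem isAcceptedFrom_iff {a l N e : ℕ} (ha : 0 < a) (he : e < 2 ^ N) (x : ZMod 2) :
    IsAcceptedFrom (a * 2 ^ l) a x N e ↔
      l ≤ N ∧ a * 2 ^ l ∣ e ∧ 1 + sTM (e / (a * 2 ^ l)) = x := by
  rcases lt_or_ge N l with hN | hN
  · simp [not_isAcceptedFrom_of_lt ha hN he x, hN]
  · simp [isAcceptedFrom_iff_of_le ha hN he x, hN]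

theorem mul_add_lt_mul_iff_of_lt {p c : ℕ} (hc : c < p) (β n : ℕ) :
    β * p + c < p * n ↔ β < n := by
  have hp : 0 < p := by omega
  rw [mul_comm p, ← Nat.div_lt_iff_lt_mul hp, mul_comm β, Nat.mul_add_div hp,
    Nat.div_eq_of_lt hc, add_zero]

theorem mul_add_lt_of_add_two_le_ceilDiv {p z β : ℕ} (hp : 0 < p) (hβ : β + 2 ≤ z ⌈/⌉ p) :
    β * p + p < z := by
  have hlt : ¬ z ⌈/⌉ p ≤ β + 1 := by omega
  rwa [ceilDiv_le_iff_le_mul hp, not_le, mul_comm, Nat.succ_mul] at hlt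

theorem isAcceptedFrom_mul_two_pow_iff {p k z β c n e : ℕ} (hk : 0 < k) (hc : c < p)
    (hz : β * p + c < z) (he : e < 2 ^ (p * n)) (x : ZMod 2) :
    IsAcceptedFrom (k * 2 ^ z) (k * 2 ^ (z - (β * p + c) - 1)) x (p * n) e ↔
      β < n ∧ k * 2 ^ z ∣ e ∧ 1 + sTM (e / (k * 2 ^ z)) = x := by
  have hm : k * 2 ^ z = k * 2 ^ (z - (β * p + c) - 1) * 2 ^ (β * p + c + 1) := by
    rw [mul_assoc, ← pow_add]
    congr 2
    omega
  rw [hm, isAcceptedFrom_iff (by positivity) he, Nat.succ_le_iff, mul_add_lt_mul_iff_of_lt hc]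

theorem gamma_beta_indistinguishable_general {p k z β c c' n e : ℕ} (hk : 0 < k)
    (hc : c < p) (hc' : c' < p) (hz : β * p + c < z) (hz' : β * p + c' < z)
    (he : e < 2 ^ (p * n)) (x : ZMod 2) :
    IsAcceptedFrom (k * 2 ^ z) (k * 2 ^ (z - (β * p + c) - 1)) x (p * n) e ↔
      IsAcceptedFrom (k * 2 ^ z) (k * 2 ^ (z - (β * p + c') - 1)) x (p * n) e := by
  rw [isAcceptedFrom_mul_two_pow_iff hk hc hz he, isAcceptedFrom_mul_two_pow_iff hk hc' hz' he]

theorem gamma_beta_indistinguishable (p m k z : ℕ) (hp : 1 ≤ p) (hkodd : Odd k) (hz : 1 ≤ z)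
    (hm : m = k * 2 ^ z)
    (β : ℕ) (hβ : β + 2 ≤ (z + p - 1) / p)
    (c : ℕ) (hc1 : 1 ≤ c) (hc2 : c ≤ p - 1) :
    ∀ n e : ℕ, e < 2 ^ (p * n) →
      ((m ∣ 2 ^ (p * n) * (k * 2 ^ (z - β * p - 1)) + e ∧
          sTM ((2 ^ (p * n) * (k * 2 ^ (z - β * p - 1)) + e) / m) = 1) ↔
       (m ∣ 2 ^ (p * n) * (k * 2 ^ (z - (β * p + c) - 1)) + e ∧
          sTM ((2 ^ (p * n) * (k * 2 ^ (z - (β * p + c) - 1)) + e) / m) = 1)) := by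
  have hlt : β * p + p < z := mul_add_lt_of_add_two_le_ceilDiv hp hβ
  exact fun n e he ↦ hm ▸ gamma_beta_indistinguishable_general (c := 0) hkodd.pos hp (by omega)
    (by omega) (by omega) he 1
end

section
/- Let b ≥ 2 and m ≥ 1 be integers and let X ⊆ ℕ. If the language {w : word over {0,…,b−1} | val_b(w) ∈ X} is regular, then the language {w : word over {0,…,b−1} | val_b(w) ∈ m·X} is regular. That is, multiplication by a constant preserves b-recognizability. -/
/-!
Long division by `m`, started from the most significant digit, is carried out by a finite
transducer: its state is the current remainder, and each input digit produces one digit of the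
quotient. Since `n ∈ m·X` iff `n % m = 0` and `n / m ∈ X`, a word has its value in `m·X` iff the
transducer ends in state `0` and outputs a word whose value is in `X`. Running an automaton on the
output of a finite transducer is again a finite automaton.
-/

/-- The value of a word over `{0,…,b-1}` (most significant digit first) in base `b`. -/
def valb (b : ℕ) (w : List (Fin b)) : ℕ := w.foldl (fun a d => b * a + d.val) 0

/-- A Mealy machine with input alphabet `α`, output alphabet `β` and states `σ`: a deterministic
letter-to-letter transducer. As for `DFA`, finiteness of `σ` is not part of the structure. -/
structure MealyMachine (α β σ : Type*) where
  step : σ → α → σ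
  out : σ → α → β
  start : σ

namespace MealyMachine

variable {α β σ τ : Type*} (T : MealyMachine α β σ)

/-- The state reached from the start state after reading a word. -/
def eval (w : List α) : σ := w.foldl T.step T.start

/-- The word written while reading a word from the state `s`. -/
def outputFrom (s : σ) : List α → List β
  | [] => []
  | a :: w => T.out s a :: outputFrom (T.step s a) w

/-- The word written while reading a word from the start state. -/
def output (w : List α) : List β := T.outputFrom T.start w

@[simp]
theorem eval_nil : T.eval [] = T.start := rfl

@[simp]
theorem output_nil : T.output [] = [] := rfl

@[simp]
theorem eval_append_singleton (w : List α) (a : α) :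
    T.eval (w ++ [a]) = T.step (T.eval w) a := by
  simp [eval]

theorem outputFrom_append_singleton (s : σ) (w : List α) (a : α) :
    T.outputFrom s (w ++ [a]) = T.outputFrom s w ++ [T.out (w.foldl T.step s) a] := by
  induction w generalizing s with
  | nil => rfl
  | cons c w ih => simp [outputFrom, ih]

@[simp]
theorem output_append_singleton (w : List α) (a : α) :
    T.output (w ++ [a]) = T.output w ++ [T.out (T.eval w) a] :=
  T.outputFrom_append_singleton T.start w a

/-- The automaton that runs `M` on the output of `T` and accepts if `M` does and `T` ends in a
state of `A`. -/
def compDFA (M : DFA β τ) (A : Set σ) : DFA α (σ × τ) where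
  step s a := (T.step s.1 a, M.step s.2 (T.out s.1 a))
  start := (T.start, M.start)
  accept := A ×ˢ M.accept

theorem eval_compDFA (M : DFA β τ) (A : Set σ) (w : List α) :
    (T.compDFA M A).eval w = (T.eval w, M.eval (T.output w)) := by
  induction w using List.reverseRecOn with
  | nil => rfl
  | append_singleton w a ih =>
    rw [DFA.eval_append_singleton, ih, eval_append_singleton, output_append_singleton,
      DFA.eval_append_singleton]
    rfl

theorem accepts_compDFA (M : DFA β τ) (A : Set σ) :
    (T.compDFA M A).accepts = {w | T.eval w ∈ A ∧ T.output w ∈ M.accepts} := by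
  ext w
  rw [DFA.mem_accepts, eval_compDFA]
  rfl

theorem isRegular_eval_mem_and_output_mem [Finite σ] {L : Language β} (hL : L.IsRegular)
    (A : Set σ) : Language.IsRegular {w | T.eval w ∈ A ∧ T.output w ∈ L} := by
  obtain ⟨τ, _, M, rfl⟩ := hL
  have := Fintype.ofFinite σ
  exact Language.isRegular_iff.2 ⟨σ × τ, inferInstance, T.compDFA M A, T.accepts_compDFA M A⟩

end MealyMachine

@[simp]
theorem valb_nil (b : ℕ) : valb b [] = 0 := rfl

@[simp]
theorem valb_append_singleton (b : ℕ) (w : List (Fin b)) (d : Fin b) :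
    valb b (w ++ [d]) = b * valb b w + d := by
  simp [valb]

/-- Long division by `m` in base `b`, most significant digit first. The state is the remainder so
far; reading the digit `d` in state `r`, the machine divides `b * r + d` by `m` and writes the
quotient, which is a digit since `b * r + d < b * m`. -/
def longDivision (b m : ℕ) [NeZero m] : MealyMachine (Fin b) (Fin b) (Fin m) where
  step r d := ((Fin.mkDivMod r d).cast (mul_comm m b)).modNat
  out r d := ((Fin.mkDivMod r d).cast (mul_comm m b)).divNat
  start := 0

section longDivision

variable {b m : ℕ} [NeZero m]

theorem longDivision_out_step (r : Fin m) (d : Fin b) :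
    m * ((longDivision b m).out r d : ℕ) + (longDivision b m).step r d = b * r + d :=
  Nat.div_add_mod (b * r + d) m

theorem mul_valb_output_add_eval_longDivision (w : List (Fin b)) :
    m * valb b ((longDivision b m).output w) + (longDivision b m).eval w = valb b w := by
  induction w using List.reverseRecOn with
  | nil =>
    simp only [MealyMachine.eval_nil, MealyMachine.output_nil, valb_nil, longDivision,
      Fin.val_zero, mul_zero, add_zero]
  | append_singleton w d ih =>
    have hstep := longDivision_out_step ((longDivision b m).eval w) d
    simp only [MealyMachine.output_append_singleton, MealyMachine.eval_append_singleton,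
      valb_append_singleton]
    linear_combination hstep + b * ih

theorem valb_div_and_mod (w : List (Fin b)) :
    valb b w / m = valb b ((longDivision b m).output w) ∧
      valb b w % m = (longDivision b m).eval w :=
  (Nat.div_mod_unique (NeZero.pos m)).2
    ⟨(add_comm _ _).trans (mul_valb_output_add_eval_longDivision w), Fin.is_lt _⟩

theorem valb_output_longDivision (w : List (Fin b)) :
    valb b ((longDivision b m).output w) = valb b w / m :=
  (valb_div_and_mod w).1.symm

theorem eval_longDivision (w : List (Fin b)) :
    ((longDivision b m).eval w : ℕ) = valb b w % m :=
  (valb_div_and_mod w).2.symm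

end longDivision

theorem mem_image_mul_iff_mod_eq_zero_and_div_mem {m : ℕ} (hm : 0 < m) {X : Set ℕ} {n : ℕ} :
    n ∈ (fun x => m * x) '' X ↔ n % m = 0 ∧ n / m ∈ X := by
  constructor
  · rintro ⟨x, hx, rfl⟩
    simpa [hm] using hx
  · rintro ⟨hmod, hdiv⟩
    exact ⟨n / m, hdiv, Nat.mul_div_cancel' (Nat.dvd_of_mod_eq_zero hmod)⟩

theorem mul_const_preserves_recognizability (b m : ℕ) (hb : 2 ≤ b) (hm : 1 ≤ m)
    (X : Set ℕ)
    (hX : Language.IsRegular {w : List (Fin b) | valb b w ∈ X}) :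
    Language.IsRegular {w : List (Fin b) | valb b w ∈ (fun x => m * x) '' X} := by
  have : NeZero m := NeZero.of_pos hm
  have hlang : {w : List (Fin b) | valb b w ∈ (fun x => m * x) '' X} =
      {w | (longDivision b m).eval w ∈ ({0} : Set (Fin m)) ∧
        valb b ((longDivision b m).output w) ∈ X} := by
    ext w
    simp only [Set.mem_ofPred_eq, Set.mem_singleton_iff, Fin.ext_iff, Fin.val_zero,
      mem_image_mul_iff_mod_eq_zero_and_div_mem hm, valb_output_longDivision, eval_longDivision]
  rw [hlang]
  exact (longDivision b m).isRegular_eval_mem_and_output_mem hX {0}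
end
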